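/- Let 𝔄 be an abelian category. Let A be an object with a chain of subobjects 0 = F₀A ≤ F₁A ≤ ⋯ ≤ F_sA = A and set A' = F_{s₀}A for some 0 ≤ s₀ ≤ s; let B be an object with a chain 0 = F₀B ≤ ⋯ ≤ F_tB = B and set B' = F_{t₀}B for some 0 ≤ t₀ ≤ t. Assume Hom(F_iA/F_{i−1}A, F_jB/F_{j−1}B) = 0 for all 1 ≤ i ≤ s and 1 ≤ j ≤ t such that i ≤ s₀ or j ≥ t₀. Then the natural map Hom(A/A', B') → Hom(A, B), sending φ to the composite of the projection A ↠ A/A', then φ, then the inclusion B' ↪ B, is bijective. -/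

import Mathlib

open CategoryTheory CategoryTheory.Limits

/-
A morphism out of a filtered object that kills `F_{i-1}A` factors on `F_iA` through the quotient
`F_iA/F_{i-1}A`; dually, a morphism landing in `F_jB` lands in `F_{j-1}B` as soon as its composite
with `F_jB ↠ F_jB/F_{j-1}B` vanishes. Climbing the first chain from `0` and descending the second
one from `B` reduces every vanishing statement to graded pieces: the pieces with `i ≤ s₀` have no
morphisms to `B`, so each `f : A ⟶ B` kills `A'`, and `A` has no morphisms to the pieces with
`j > t₀`, so `f` lands in `B'`.
-/

section

variable {C : Type*} [Category C] [HasZeroMorphisms C]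

theorem bijective_cokernelπ_comp_comp_arrow {A B : C} (S : Subobject A) [HasCokernel S.arrow]
    (T : Subobject B) (hS : ∀ f : A ⟶ B, S.arrow ≫ f = 0) (hT : ∀ f : A ⟶ B, T.Factors f) :
    Function.Bijective (fun φ : cokernel S.arrow ⟶ (T : C) =>
      cokernel.π S.arrow ≫ φ ≫ T.arrow) := by
  refine ⟨fun φ ψ h => ?_, fun f => ?_⟩
  · simpa only [cancel_epi, cancel_mono] using h
  · have hf : S.arrow ≫ T.factorThru f (hT f) = 0 := by
      rw [← cancel_mono T.arrow, Category.assoc, Subobject.factorThru_arrow, hS f, zero_comp]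
    refine ⟨cokernel.desc _ _ hf, ?_⟩
    simp only [cokernel.π_desc_assoc, Subobject.factorThru_arrow]

theorem arrow_comp_eq_zero_of_cokernel_ofLE {A Y : C} {S T : Subobject A} (h : S ≤ T)
    [HasCokernel (S.ofLE T h)] {g : A ⟶ Y} (hg : S.arrow ≫ g = 0)
    (hv : ∀ f : cokernel (S.ofLE T h) ⟶ Y, f = 0) : T.arrow ≫ g = 0 := by
  have hTg : S.ofLE T h ≫ T.arrow ≫ g = 0 := by rw [Subobject.ofLE_arrow_assoc, hg]
  rw [← cokernel.π_desc _ _ hTg, hv (cokernel.desc _ _ hTg), comp_zero]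

theorem exists_comp_eq_of_comp_cokernelπ_eq_zero {X Y Z : C} (m : Y ⟶ Z) [NormalMono m]
    [HasCokernel m] {g : X ⟶ Z} (hg : g ≫ cokernel.π m = 0) : ∃ g' : X ⟶ Y, g' ≫ m = g := by
  have hgm : g ≫ NormalMono.g (f := m) = 0 := by
    rw [← cokernel.π_desc m _ NormalMono.w, ← Category.assoc, hg, zero_comp]
  exact ⟨_, (NormalMono.lift' m g hgm).2⟩

theorem factors_of_cokernel_ofLE {X B : C} {S T : Subobject B} (h : S ≤ T)
    [NormalMono (S.ofLE T h)] [HasCokernel (S.ofLE T h)] {g : X ⟶ B} (hg : T.Factors g)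
    (hv : ∀ f : X ⟶ cokernel (S.ofLE T h), f = 0) : S.Factors g := by
  obtain ⟨g', hg'⟩ := exists_comp_eq_of_comp_cokernelπ_eq_zero (S.ofLE T h)
    (hv (T.factorThru g hg ≫ cokernel.π _))
  rw [← Subobject.factorThru_arrow T g hg, ← hg', Category.assoc, Subobject.ofLE_arrow]
  exact Subobject.factors_comp_arrow g'

variable [HasCokernels C]

/-- The graded piece `F_{i+1}A / F_iA` of a finite chain of subobjects of `A`. As `Fin n` counts
from `0`, the quotient usually written `F_iA / F_{i-1}A`, `1 ≤ i ≤ n`, is the piece `i - 1`. -/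
noncomputable abbrev gradedPiece {A : C} {n : ℕ} (F : Fin (n + 1) → Subobject A) (hF : Monotone F)
    (i : Fin n) : C :=
  cokernel (Subobject.ofLE (F i.castSucc) (F i.succ) (hF (Fin.castSucc_le_succ i)))

theorem arrow_comp_eq_zero_of_gradedPiece [HasZeroObject C] {A Y : C} {n : ℕ}
    {F : Fin (n + 1) → Subobject A} (hF : Monotone F) (hF0 : F 0 = ⊥) (k : Fin (n + 1))
    (hv : ∀ i : Fin n, i.succ ≤ k → ∀ f : gradedPiece F hF i ⟶ Y, f = 0) (g : A ⟶ Y) :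
    (F k).arrow ≫ g = 0 := by
  induction k using Fin.induction with
  | zero => rw [hF0, Subobject.bot_arrow, zero_comp]
  | succ i ih =>
    have hi : (F i.castSucc).arrow ≫ g = 0 :=
      ih fun j hj => hv j (hj.trans (Fin.castSucc_le_succ i))
    exact arrow_comp_eq_zero_of_cokernel_ofLE _ hi (hv i le_rfl)

theorem factors_of_gradedPiece [IsNormalMonoCategory C] {X B : C} {n : ℕ}
    {F : Fin (n + 1) → Subobject B} (hF : Monotone F) (hFtop : F (Fin.last n) = ⊤)
    (k : Fin (n + 1))
    (hv : ∀ j : Fin n, k ≤ j.castSucc → ∀ f : X ⟶ gradedPiece F hF j, f = 0) (g : X ⟶ B) :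
    (F k).Factors g := by
  induction k using Fin.reverseInduction with
  | last => exact hFtop ▸ Subobject.top_factors g
  | cast j ih =>
    have hj : (F j.succ).Factors g :=
      ih fun i hi => hv i ((Fin.castSucc_le_succ j).trans hi)
    let _ := normalMonoOfMono (Subobject.ofLE _ _ (hF (Fin.castSucc_le_succ j)))
    exact factors_of_cokernel_ofLE _ hj (hv j le_rfl)

variable [HasZeroObject C]

theorem eq_zero_of_forall_gradedPiece_hom {A Y : C} {n : ℕ} {F : Fin (n + 1) → Subobject A}
    (hF : Monotone F) (hF0 : F 0 = ⊥) (hFtop : F (Fin.last n) = ⊤)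
    (hv : ∀ (i : Fin n) (f : gradedPiece F hF i ⟶ Y), f = 0) (g : A ⟶ Y) : g = 0 := by
  have htop := arrow_comp_eq_zero_of_gradedPiece hF hF0 (Fin.last n) (fun i _ => hv i) g
  rw [hFtop] at htop
  exact zero_of_epi_comp _ htop

theorem eq_zero_of_forall_hom_gradedPiece [IsNormalMonoCategory C] {X B : C} {n : ℕ}
    {F : Fin (n + 1) → Subobject B} (hF : Monotone F) (hF0 : F 0 = ⊥)
    (hFtop : F (Fin.last n) = ⊤)
    (hv : ∀ (j : Fin n) (f : X ⟶ gradedPiece F hF j), f = 0) (g : X ⟶ B) : g = 0 := by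
  have hbot := factors_of_gradedPiece hF hFtop 0 (fun j _ => hv j) g
  rwa [hF0, Subobject.bot_factors_iff_zero] at hbot

theorem stmt7_general [IsNormalMonoCategory C] {A B : C} {s t : ℕ}
    {FA : Fin (s + 1) → Subobject A} (hFA : Monotone FA)
    (hFA0 : FA 0 = ⊥) (hFAtop : FA (Fin.last s) = ⊤) (s₀ : Fin (s + 1))
    {FB : Fin (t + 1) → Subobject B} (hFB : Monotone FB)
    (hFB0 : FB 0 = ⊥) (hFBtop : FB (Fin.last t) = ⊤) (t₀ : Fin (t + 1))
    (hvanish : ∀ (i : Fin s) (j : Fin t), (i.succ ≤ s₀ ∨ t₀ < j.succ) →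
      ∀ f : gradedPiece FA hFA i ⟶ gradedPiece FB hFB j, f = 0) :
    Function.Bijective (fun φ : cokernel (FA s₀).arrow ⟶ (FB t₀ : C) =>
      cokernel.π (FA s₀).arrow ≫ φ ≫ (FB t₀).arrow) := by
  have hA (i : Fin s) (hi : i.succ ≤ s₀) (g : gradedPiece FA hFA i ⟶ B) : g = 0 :=
    eq_zero_of_forall_hom_gradedPiece hFB hFB0 hFBtop (fun j => hvanish i j (.inl hi)) g
  have hB (j : Fin t) (hj : t₀ ≤ j.castSucc) (g : A ⟶ gradedPiece FB hFB j) : g = 0 :=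
    eq_zero_of_forall_gradedPiece_hom hFA hFA0 hFAtop
      (fun i => hvanish i j (.inr (Fin.le_castSucc_iff.mp hj))) g
  exact bijective_cokernelπ_comp_comp_arrow _ _
    (arrow_comp_eq_zero_of_gradedPiece hFA hFA0 s₀ hA) (factors_of_gradedPiece hFB hFBtop t₀ hB)

end

/-- **factor-through condition.**  Given objects `A`, `B` of an abelian category
with finite chains of subobjects `0 = F₀A ≤ ⋯ ≤ F_sA = A` and `0 = F₀B ≤ ⋯ ≤ F_tB = B`,
set `A' := F_{s₀}A`, `B' := F_{t₀}B`.  If `Hom(F_iA/F_{i−1}A, F_jB/F_{j−1}B) = 0` whenever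
`i ≤ s₀` or `j ≥ t₀`, then the natural map `Hom(A/A', B') → Hom(A, B)` is bijective. -/
theorem stmt7 {𝒜 : Type*} [Category 𝒜] [Abelian 𝒜]
    (A B : 𝒜) (s t : ℕ)
    (FA : Fin (s + 1) → Subobject A) (hFA : Monotone FA)
    (hFA0 : FA 0 = ⊥) (hFAtop : FA (Fin.last s) = ⊤) (s₀ : Fin (s + 1))
    (FB : Fin (t + 1) → Subobject B) (hFB : Monotone FB)
    (hFB0 : FB 0 = ⊥) (hFBtop : FB (Fin.last t) = ⊤) (t₀ : Fin (t + 1))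
    (hvanish : ∀ (i : Fin s) (j : Fin t), (i.succ ≤ s₀ ∨ t₀ ≤ j.succ) →
      ∀ f : cokernel (Subobject.ofLE (FA i.castSucc) (FA i.succ)
              (hFA (Fin.castSucc_le_succ i))) ⟶
            cokernel (Subobject.ofLE (FB j.castSucc) (FB j.succ)
              (hFB (Fin.castSucc_le_succ j))), f = 0) :
    Function.Bijective (fun φ : (cokernel (FA s₀).arrow ⟶ ((FB t₀ : 𝒜))) =>
      cokernel.π (FA s₀).arrow ≫ φ ≫ (FB t₀).arrow) := by
  exact stmt7_general hFA hFA0 hFAtop s₀ hFB hFB0 hFBtop t₀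
    fun i j hij => hvanish i j (hij.imp_right le_of_lt)
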